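/- arXiv:2311.01783 — 2 statements merged into one kernel-verified Lean document; each statement's English description precedes it below -/
import Mathlib

section
/- B^T D B is block tridiagonal with the following m×m blocks: the (0,0) diagonal block is P_0^{-1} + Q_1; for 1 ≤ t ≤ N−1 the (t,t) diagonal block is (M_t^T)^{-1} Q_t M_t^{-1} + Q_{t+1}; the (N,N) diagonal block is (M_N^T)^{-1} Q_N M_N^{-1}; for 1 ≤ t ≤ N the (t−1,t) block is −Q_t M_t^{-1} and the (t,t−1) block is −(M_t^T)^{-1} Q_t; and all blocks (s,t) with |s−t| ≥ 2 are zero. -/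
/-!
The `(s, t)` block of `Bᵀ D B` is `∑ r, (B_{r,s})ᵀ D_r B_{r,t}`, since `D` is block diagonal. The
`s`-th block column of `B` has at most two nonzero blocks: `B_{s,s}`, and `-I` in row `s + 1` when
`s < N`. So the sum collapses to `(B_{s,s})ᵀ D_s B_{s,t} - D_{s+1} B_{s+1,t}`, with the last term
present only for `s < N` (`bidiag_gram_block`), and each claimed block is read off from this by
comparing `t` with `s` and `s + 1`.
-/

open Matrix

/-- The `(r, s)` block of the block lower bidiagonal matrix with diagonal blocks `A r` and all
subdiagonal blocks equal to `-1`. -/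
def bidiagBlock {m : ℕ} (A : ℕ → Matrix (Fin m) (Fin m) ℝ) (r s : ℕ) : Matrix (Fin m) (Fin m) ℝ :=
  if r = s then A r else if s + 1 = r then -1 else 0

/-- Blockwise expansion of `Bᵀ D B` for a block diagonal `D` with diagonal blocks `E r`. -/
lemma block_gram_apply {m N : ℕ} (b : ℕ → ℕ → Matrix (Fin m) (Fin m) ℝ)
    (E : ℕ → Matrix (Fin m) (Fin m) ℝ)
    (B D : Matrix (Fin (N + 1) × Fin m) (Fin (N + 1) × Fin m) ℝ)
    (hB : ∀ r s i j, B (r, i) (s, j) = b r s i j)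
    (hD : ∀ r s i j, D (r, i) (s, j) = if r = s then E r i j else 0)
    (s t : Fin (N + 1)) (i j : Fin m) :
    (Bᵀ * D * B) (s, i) (t, j) =
      (∑ r : Fin (N + 1), (b r s)ᵀ * E r * b r t) i j := by
  simp only [Matrix.mul_apply, Fintype.sum_prod_type, Matrix.transpose_apply, hB, hD,
    Matrix.sum_apply]
  refine Finset.sum_congr rfl fun r _ => Finset.sum_congr rfl fun k _ => ?_
  congr 1
  rw [Finset.sum_eq_single r]
  · simp
  · intro r' _ hr
    simp [hr]
  · simp

/-- Only the rows `r = s` and `r = s + 1` contribute to the `(s, t)` block of the Gram matrix. -/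
lemma bidiag_gram_block {m N : ℕ} (A E : ℕ → Matrix (Fin m) (Fin m) ℝ) (s t : Fin (N + 1)) :
    (∑ r : Fin (N + 1), (bidiagBlock A r s)ᵀ * E r * bidiagBlock A r t) =
      (A s)ᵀ * E s * bidiagBlock A s t +
        if (s : ℕ) < N then -(E (s + 1) * bidiagBlock A (s + 1) t) else 0 := by
  rw [Fin.sum_univ_eq_sum_range
    (fun r => (bidiagBlock A r s)ᵀ * E r * bidiagBlock A r t) (N + 1)]
  have h : ∀ r : ℕ, (bidiagBlock A r s)ᵀ * E r * bidiagBlock A r t =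
      (if (s : ℕ) = r then (A r)ᵀ * E r * bidiagBlock A r t else 0) +
        if (s : ℕ) + 1 = r then -(E r * bidiagBlock A r t) else 0 := by
    intro r
    rw [show bidiagBlock A r s = if r = (s : ℕ) then A r else if (s : ℕ) + 1 = r then -1 else 0
      from rfl]
    split_ifs <;> first | omega | simp
  simp only [h, Finset.sum_add_distrib, Finset.sum_ite_eq, Finset.mem_range, s.isLt, if_true,
    Nat.add_lt_add_iff_right]

/-- Proposition 2 of the paper: the trajectory precision matrix `Q = Bᵀ D B`
is block tridiagonal, with the stated `m × m` blocks. -/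
theorem precision_matrix_block_tridiagonal
    (m N : ℕ) (hm : 1 ≤ m) (hN : 1 ≤ N)
    (P0 : Matrix (Fin m) (Fin m) ℝ) (hP0 : P0.PosDef)
    (M Q : ℕ → Matrix (Fin m) (Fin m) ℝ)
    (hM : ∀ t, 1 ≤ t → t ≤ N → IsUnit (M t))
    (hQ : ∀ t, 1 ≤ t → t ≤ N → (Q t).PosDef)
    (B D : Matrix (Fin (N + 1) × Fin m) (Fin (N + 1) × Fin m) ℝ)
    (hB : B = fun p q =>
      if p.1 = q.1 then
        (if (p.1 : ℕ) = 0 then (1 : Matrix (Fin m) (Fin m) ℝ) p.2 q.2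
         else (M (p.1 : ℕ))⁻¹ p.2 q.2)
      else if (q.1 : ℕ) + 1 = (p.1 : ℕ) then (-1 : Matrix (Fin m) (Fin m) ℝ) p.2 q.2
      else 0)
    (hD : D = fun p q =>
      if p.1 = q.1 then
        (if (p.1 : ℕ) = 0 then P0⁻¹ p.2 q.2 else Q (p.1 : ℕ) p.2 q.2)
      else 0) :
    -- (0,0) diagonal block
    (∀ i j : Fin m,
        (Bᵀ * D * B) (⟨0, by omega⟩, i) (⟨0, by omega⟩, j) = (P0⁻¹ + Q 1) i j) ∧
    -- (t,t) diagonal blocks for 1 ≤ t ≤ N-1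
    (∀ t : Fin (N + 1), 1 ≤ (t : ℕ) → (t : ℕ) ≤ N - 1 → ∀ i j : Fin m,
        (Bᵀ * D * B) (t, i) (t, j) =
          (((M (t : ℕ))ᵀ)⁻¹ * Q (t : ℕ) * (M (t : ℕ))⁻¹ + Q ((t : ℕ) + 1)) i j) ∧
    -- (N,N) diagonal block
    (∀ i j : Fin m,
        (Bᵀ * D * B) (⟨N, by omega⟩, i) (⟨N, by omega⟩, j) =
          (((M N)ᵀ)⁻¹ * Q N * (M N)⁻¹) i j) ∧
    -- off-diagonal blocks (t-1,t) and (t,t-1) for 1 ≤ t ≤ N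
    (∀ s t : Fin (N + 1), (s : ℕ) + 1 = (t : ℕ) → ∀ i j : Fin m,
        (Bᵀ * D * B) (s, i) (t, j) = (-(Q (t : ℕ) * (M (t : ℕ))⁻¹)) i j ∧
        (Bᵀ * D * B) (t, i) (s, j) = (-(((M (t : ℕ))ᵀ)⁻¹ * Q (t : ℕ))) i j) ∧
    -- all blocks at distance ≥ 2 vanish
    (∀ s t : Fin (N + 1), ((s : ℕ) + 2 ≤ (t : ℕ) ∨ (t : ℕ) + 2 ≤ (s : ℕ)) →
        ∀ i j : Fin m, (Bᵀ * D * B) (s, i) (t, j) = 0) := by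
  let A : ℕ → Matrix (Fin m) (Fin m) ℝ := fun r => if r = 0 then 1 else (M r)⁻¹
  let E : ℕ → Matrix (Fin m) (Fin m) ℝ := fun r => if r = 0 then P0⁻¹ else Q r
  have hB' : ∀ r s i j, B (r, i) (s, j) = bidiagBlock A r s i j := by
    intro r s i j
    simp only [hB, bidiagBlock, A, Fin.ext_iff]
    split_ifs <;> rfl
  have hD' : ∀ r s i j, D (r, i) (s, j) = if r = s then E r i j else 0 := by
    intro r s i j
    simp only [hD, E]
    split_ifs <;> rfl
  have key : ∀ (s t : Fin (N + 1)) (i j : Fin m), (Bᵀ * D * B) (s, i) (t, j) =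
      ((A s)ᵀ * E s * bidiagBlock A s t +
        if (s : ℕ) < N then -(E (s + 1) * bidiagBlock A (s + 1) t) else 0) i j := by
    intro s t i j
    rw [block_gram_apply (fun r s => bidiagBlock A r s) E B D hB' hD', bidiag_gram_block]
  refine ⟨fun i j => ?_, fun t h1 h2 i j => ?_, fun i j => ?_, fun s t hst i j => ⟨?_, ?_⟩,
    fun s t hst i j => ?_⟩
  · rw [key]
    have : 0 < N := hN
    simp [A, E, bidiagBlock, this]
  · rw [key]
    have h3 : (t : ℕ) < N := by omega
    have h4 : (t : ℕ) ≠ 0 := by omega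
    simp [A, E, bidiagBlock, h3, h4, Matrix.transpose_nonsing_inv]
  · rw [key]
    have h4 : N ≠ 0 := by omega
    simp [A, E, bidiagBlock, h4, Matrix.transpose_nonsing_inv]
  · rw [key]
    have h3 : (s : ℕ) < N := by omega
    have h4 : (s : ℕ) ≠ t := by omega
    have h5 : (t : ℕ) + 1 ≠ s := by omega
    have h6 : (t : ℕ) ≠ 0 := by omega
    simp [A, E, bidiagBlock, h3, h4, h5, h6, hst]
  · rw [key]
    have h4 : (t : ℕ) ≠ s := by omega
    have h5 : (t : ℕ) + 1 ≠ s := by omega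
    have h6 : (t : ℕ) ≠ 0 := by omega
    simp [A, E, bidiagBlock, h4, h5, h6, hst, Matrix.transpose_nonsing_inv]
  · rw [key]
    have h1 : (s : ℕ) ≠ t := by omega
    have h2 : (t : ℕ) + 1 ≠ s := by omega
    have h3 : (s : ℕ) + 1 ≠ t := by omega
    simp [A, E, bidiagBlock, h1, h2, h3, h1.symm]
end

section
/- Define the (N+1)m × (N+1)m block covariance matrix P of the state trajectory as follows: set Σ_0 := P_0 and Σ_t := M_t (Σ_{t−1} + Q_t^{-1}) M_t^T for 1 ≤ t ≤ N; the (t,t) block of P is Σ_t; for s < t the (s,t) block of P is Σ_s·(M_t M_{t−1} ⋯ M_{s+1})^T and the (t,s) block is the transpose (M_t M_{t−1} ⋯ M_{s+1})·Σ_s. Then P·(B^T D B) equals the (N+1)m × (N+1)m identity matrix; that is, the precision matrix Q = B^T D B is the inverse of the covariance matrix of the trajectory. -/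
/-!
Since all matrices are square, it suffices to show that `L := P Bᵀ D` is a right inverse of `B`:
then `L` is also a left inverse, which is the claim. The matrix `L` is block lower triangular and
explicit: its `(s, t)` block is `Φ t s * M t` for `t ≤ s` (with `M 0` read as `1`) and `0` for
`s < t`. It maps the noise `(x_0, w_1, …, w_N)` to the trajectory, whereas `B` recovers the noise
from the trajectory.

`cov_mul_whitening_block` computes the blocks of `P Bᵀ`, using the covariance recursion on and below
the diagonal and the one-step recursion of `Φ` above it. Multiplying by the block-diagonal `D`
cancels `P_0` and `Q_t⁻¹`. Finally `B L = 1` because `Φ t s = M s * Φ t (s - 1)` makes the two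
nonzero blocks in row `s` of `B` cancel below the diagonal.
-/

open Matrix

/-- The block matrix with `(s, t)` block `F s t`. The blocks are indexed by all natural numbers, so
that index shifts `t - 1` involve no coercions; only indices at most `N` are used. -/
def blockMat (m N : ℕ) (F : ℕ → ℕ → Matrix (Fin m) (Fin m) ℝ) :
    Matrix (Fin (N + 1) × Fin m) (Fin (N + 1) × Fin m) ℝ :=
  fun p q => F p.1 q.1 p.2 q.2

lemma blockMat_mul (m N : ℕ) (F G : ℕ → ℕ → Matrix (Fin m) (Fin m) ℝ) :
    blockMat m N F * blockMat m N G =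
      blockMat m N (fun s t => ∑ u ∈ Finset.range (N + 1), F s u * G u t) := by
  ext p q
  simp only [blockMat, Matrix.mul_apply, Matrix.sum_apply, Fintype.sum_prod_type]
  exact Fin.sum_univ_eq_sum_range
    (fun u => ∑ j, F p.1 u p.2 j * G u q.1 j q.2) (N + 1)

lemma blockMat_transpose (m N : ℕ) (F : ℕ → ℕ → Matrix (Fin m) (Fin m) ℝ) :
    (blockMat m N F)ᵀ = blockMat m N (fun s t => (F t s)ᵀ) := rfl

lemma blockMat_congr {m N : ℕ} {F G : ℕ → ℕ → Matrix (Fin m) (Fin m) ℝ}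
    (h : ∀ s t, s ≤ N → t ≤ N → F s t = G s t) : blockMat m N F = blockMat m N G := by
  ext p q
  simp only [blockMat]
  rw [h p.1 q.1 (by omega) (by omega)]

lemma blockMat_one (m N : ℕ) :
    blockMat m N (fun s t => if s = t then 1 else 0) = 1 := by
  ext ⟨s, i⟩ ⟨t, j⟩
  by_cases h : s = t
  · simp [blockMat, h, Matrix.one_apply]
  · have h' : (s : ℕ) ≠ t := fun e => h (Fin.ext e)
    simp [blockMat, h, h']

/-- A sum supported on `{t - 1, t}`: the shape of the sums that a bidiagonal factor produces. -/
lemma sum_range_bidiag {A : Type*} [AddCommMonoid A] {N t : ℕ} (ht : t ≤ N) (f : ℕ → A)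
    (hf : ∀ u, u ≠ t → u + 1 ≠ t → f u = 0) :
    ∑ u ∈ Finset.range (N + 1), f u = f t + (if t = 0 then 0 else f (t - 1)) := by
  rcases t with _ | k
  · rw [Finset.sum_eq_single 0 (fun u _ h => hf u h (by omega)) (by simp)]
    simp
  · have hsub : ({k + 1, k} : Finset ℕ) ⊆ Finset.range (N + 1) := by
      intro u hu
      simp only [Finset.mem_insert, Finset.mem_singleton] at hu
      simp only [Finset.mem_range]
      omega
    rw [← Finset.sum_subset hsub, Finset.sum_pair (by omega)]
    · simp
    · intro u _ hu
      simp only [Finset.mem_insert, Finset.mem_singleton, not_or] at hu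
      exact hf u hu.1 (by omega)

/-- The transition products also satisfy the recursion in the starting index. -/
lemma transition_step_right {m N : ℕ} {M : ℕ → Matrix (Fin m) (Fin m) ℝ}
    {Φ : ℕ → ℕ → Matrix (Fin m) (Fin m) ℝ} (hΦself : ∀ s, Φ s s = 1)
    (hΦstep : ∀ s t, s < t → t ≤ N → Φ s t = M t * Φ s (t - 1))
    (k s : ℕ) (hks : k + 1 ≤ s) (hs : s ≤ N) : Φ k s = Φ (k + 1) s * M (k + 1) := by
  induction s, hks using Nat.le_induction with
  | base => simp [hΦstep k (k + 1) (by omega) hs, hΦself]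
  | succ n hn ih =>
    rw [hΦstep k (n + 1) (by omega) hs, hΦstep (k + 1) (n + 1) (by omega) hs,
      Nat.add_sub_cancel, ih (by omega), Matrix.mul_assoc]

/-- The `(s, t)` block of the bidiagonal matrix `B`. -/
noncomputable def bBlock {m : ℕ} (M : ℕ → Matrix (Fin m) (Fin m) ℝ) (s t : ℕ) : Matrix (Fin m) (Fin m) ℝ :=
  if s = t then (if s = 0 then 1 else (M s)⁻¹) else if t + 1 = s then -1 else 0

/-- The `(s, t)` block of the covariance matrix `P`. -/
def covBlock {m : ℕ} (Sig : ℕ → Matrix (Fin m) (Fin m) ℝ)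
    (Φ : ℕ → ℕ → Matrix (Fin m) (Fin m) ℝ) (s t : ℕ) : Matrix (Fin m) (Fin m) ℝ :=
  if s = t then Sig s else if s < t then Sig s * (Φ s t)ᵀ else Φ t s * Sig t

/-- The `(s, t)` block of `B⁻¹ = P Bᵀ D`: the response of `x_s` to the noise entering at time
`t`. -/
def respBlock {m : ℕ} (M : ℕ → Matrix (Fin m) (Fin m) ℝ)
    (Φ : ℕ → ℕ → Matrix (Fin m) (Fin m) ℝ) (s t : ℕ) : Matrix (Fin m) (Fin m) ℝ :=
  if t ≤ s then Φ t s * (if t = 0 then 1 else M t) else 0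

lemma covBlock_of_le {m : ℕ} {Sig : ℕ → Matrix (Fin m) (Fin m) ℝ}
    {Φ : ℕ → ℕ → Matrix (Fin m) (Fin m) ℝ} (hΦself : ∀ s, Φ s s = 1) {s t : ℕ} (h : t ≤ s) :
    covBlock Sig Φ s t = Φ t s * Sig t := by
  rcases h.eq_or_lt with rfl | h
  · simp [covBlock, hΦself]
  · simp [covBlock, h.ne', h.not_gt]

lemma covBlock_of_ge {m : ℕ} {Sig : ℕ → Matrix (Fin m) (Fin m) ℝ}
    {Φ : ℕ → ℕ → Matrix (Fin m) (Fin m) ℝ} (hΦself : ∀ s, Φ s s = 1) {s t : ℕ} (h : s ≤ t) :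
    covBlock Sig Φ s t = Sig s * (Φ s t)ᵀ := by
  rcases h.eq_or_lt with rfl | h
  · simp [covBlock, hΦself]
  · simp [covBlock, h.ne, h]

/-- The blocks of `P Bᵀ` are those of `B⁻¹ D⁻¹`: the covariance of `x_s` with the noise entering at
time `t`. -/
lemma cov_mul_whitening_block {m N : ℕ} {M Q Sig : ℕ → Matrix (Fin m) (Fin m) ℝ}
    {Φ : ℕ → ℕ → Matrix (Fin m) (Fin m) ℝ}
    (hM : ∀ t, 1 ≤ t → t ≤ N → IsUnit (M t))
    (hSig : ∀ t, 1 ≤ t → t ≤ N → Sig t = M t * (Sig (t - 1) + (Q t)⁻¹) * (M t)ᵀ)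
    (hΦself : ∀ s, Φ s s = 1)
    (hΦstep : ∀ s t, s < t → t ≤ N → Φ s t = M t * Φ s (t - 1))
    (s t : ℕ) (hs : s ≤ N) (ht : t ≤ N) :
    ∑ u ∈ Finset.range (N + 1), covBlock Sig Φ s u * (bBlock M t u)ᵀ =
      respBlock M Φ s t * (if t = 0 then Sig 0 else (Q t)⁻¹) := by
  rw [sum_range_bidiag ht]
  swap
  · intro u h1 h2
    simp [bBlock, h1.symm, h2]
  rcases t with _ | k
  · simp [bBlock, respBlock, covBlock_of_le hΦself]
  have hdet : IsUnit (M (k + 1))ᵀ.det := by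
    rw [Matrix.det_transpose]
    exact (Matrix.isUnit_iff_isUnit_det _).1 (hM (k + 1) (by omega) ht)
  simp only [bBlock, Nat.add_eq_zero_iff, one_ne_zero, and_false, if_false, if_true,
    Nat.add_sub_cancel, Nat.succ_ne_self, Matrix.transpose_neg, Matrix.transpose_one,
    Matrix.mul_neg, Matrix.mul_one, Matrix.transpose_nonsing_inv, respBlock]
  by_cases h : k + 1 ≤ s
  · rw [if_pos h, covBlock_of_le hΦself h, covBlock_of_le hΦself (by omega : k ≤ s),
      transition_step_right hΦself hΦstep k s h hs, hSig (k + 1) (by omega) ht,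
      Nat.add_sub_cancel, Matrix.mul_assoc, Matrix.mul_nonsing_inv_cancel_right _ _ hdet]
    noncomm_ring
  · rw [if_neg h, covBlock_of_ge hΦself (by omega : s ≤ k + 1),
      covBlock_of_ge hΦself (by omega : s ≤ k), hΦstep s (k + 1) (by omega) ht,
      Nat.add_sub_cancel, Matrix.transpose_mul, ← Matrix.mul_assoc,
      Matrix.mul_nonsing_inv_cancel_right _ _ hdet]
    simp

lemma whitening_mul_resp_block {m N : ℕ} {M : ℕ → Matrix (Fin m) (Fin m) ℝ}
    {Φ : ℕ → ℕ → Matrix (Fin m) (Fin m) ℝ}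
    (hM : ∀ t, 1 ≤ t → t ≤ N → IsUnit (M t))
    (hΦself : ∀ s, Φ s s = 1)
    (hΦstep : ∀ s t, s < t → t ≤ N → Φ s t = M t * Φ s (t - 1))
    (s t : ℕ) (hs : s ≤ N) :
    ∑ u ∈ Finset.range (N + 1), bBlock M s u * respBlock M Φ u t =
      if s = t then 1 else 0 := by
  rw [sum_range_bidiag hs]
  swap
  · intro u h1 h2
    simp [bBlock, h1.symm, h2]
  rcases s with _ | k
  · rcases t with _ | t <;> simp [bBlock, respBlock, hΦself]
  have hdet : IsUnit (M (k + 1)).det :=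
    (Matrix.isUnit_iff_isUnit_det _).1 (hM (k + 1) (by omega) hs)
  simp only [bBlock, Nat.add_eq_zero_iff, one_ne_zero, and_false, if_false, if_true,
    Nat.add_sub_cancel, Nat.succ_ne_self, Matrix.neg_mul, Matrix.one_mul, respBlock]
  rcases lt_trichotomy t (k + 1) with h | rfl | h
  · rw [if_pos h.le, if_pos (by omega : t ≤ k), if_neg h.ne', hΦstep t (k + 1) h hs,
      Nat.add_sub_cancel, Matrix.mul_assoc (M (k + 1)),
      Matrix.nonsing_inv_mul_cancel_left _ _ hdet, add_neg_cancel]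
  · simp [hΦself, Matrix.nonsing_inv_mul _ hdet]
  · rw [if_neg (by omega : ¬ t ≤ k + 1), if_neg (by omega : ¬ t ≤ k), if_neg h.ne]
    simp

/-- Proposition 2 of the paper: the block covariance matrix `P` of the
Gauss–Markov state trajectory is the inverse of the precision matrix
`Q = Bᵀ D B`, i.e. `P * (Bᵀ D B) = 1`. -/
theorem covariance_inverse_of_precision
    (m N : ℕ) (hm : 1 ≤ m) (hN : 1 ≤ N)
    (P0 : Matrix (Fin m) (Fin m) ℝ) (hP0 : P0.PosDef)
    (M Q : ℕ → Matrix (Fin m) (Fin m) ℝ)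
    (hM : ∀ t, 1 ≤ t → t ≤ N → IsUnit (M t))
    (hQ : ∀ t, 1 ≤ t → t ≤ N → (Q t).PosDef)
    (B D : Matrix (Fin (N + 1) × Fin m) (Fin (N + 1) × Fin m) ℝ)
    (hB : B = fun p q =>
      if p.1 = q.1 then
        (if (p.1 : ℕ) = 0 then (1 : Matrix (Fin m) (Fin m) ℝ) p.2 q.2
         else (M (p.1 : ℕ))⁻¹ p.2 q.2)
      else if (q.1 : ℕ) + 1 = (p.1 : ℕ) then (-1 : Matrix (Fin m) (Fin m) ℝ) p.2 q.2
      else 0)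
    (hD : D = fun p q =>
      if p.1 = q.1 then
        (if (p.1 : ℕ) = 0 then P0⁻¹ p.2 q.2 else Q (p.1 : ℕ) p.2 q.2)
      else 0)
    -- the marginal covariances Sig_t of the trajectory
    (Sig : ℕ → Matrix (Fin m) (Fin m) ℝ)
    (hSig0 : Sig 0 = P0)
    (hSig : ∀ t, 1 ≤ t → t ≤ N → Sig t = M t * (Sig (t - 1) + (Q t)⁻¹) * (M t)ᵀ)
    -- the transition products Φ s t = M_t M_{t-1} ⋯ M_{s+1}
    (Φ : ℕ → ℕ → Matrix (Fin m) (Fin m) ℝ)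
    (hΦself : ∀ s, Φ s s = 1)
    (hΦstep : ∀ s t, s < t → t ≤ N → Φ s t = M t * Φ s (t - 1))
    -- the block covariance matrix of the trajectory
    (P : Matrix (Fin (N + 1) × Fin m) (Fin (N + 1) × Fin m) ℝ)
    (hP : P = fun p q =>
      if p.1 = q.1 then Sig (p.1 : ℕ) p.2 q.2
      else if (p.1 : ℕ) < (q.1 : ℕ) then
        (Sig (p.1 : ℕ) * (Φ (p.1 : ℕ) (q.1 : ℕ))ᵀ) p.2 q.2
      else (Φ (q.1 : ℕ) (p.1 : ℕ) * Sig (q.1 : ℕ)) p.2 q.2) :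
    P * (Bᵀ * D * B) = 1 := by
  have hB' : B = blockMat m N (bBlock M) := by
    rw [hB]
    ext p q
    simp only [blockMat, bBlock, Fin.ext_iff]
    split_ifs <;> rfl
  have hD' : D = blockMat m N
      (fun s t => if s = t then (if s = 0 then P0⁻¹ else Q s) else 0) := by
    rw [hD]
    ext p q
    simp only [blockMat, Fin.ext_iff]
    split_ifs <;> rfl
  have hP' : P = blockMat m N (covBlock Sig Φ) := by
    rw [hP]
    ext p q
    simp only [blockMat, covBlock, Fin.ext_iff]
    split_ifs <;> rfl
  have hL : P * Bᵀ * D = blockMat m N (respBlock M Φ) := by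
    rw [hP', hB', hD', blockMat_transpose, blockMat_mul,
      blockMat_congr (cov_mul_whitening_block hM hSig hΦself hΦstep), blockMat_mul]
    refine blockMat_congr fun s t _ ht => ?_
    rw [Finset.sum_eq_single t (fun u _ h => by simp [h])
      (fun h => absurd (Finset.mem_range.2 (by omega)) h), if_pos rfl]
    rcases Nat.eq_zero_or_pos t with rfl | h0
    · simp only [if_true, hSig0]
      exact Matrix.mul_nonsing_inv_cancel_right _ _
        ((Matrix.isUnit_iff_isUnit_det _).1 hP0.isUnit)
    · simp only [h0.ne', if_false]
      exact Matrix.nonsing_inv_mul_cancel_right _ _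
        ((Matrix.isUnit_iff_isUnit_det _).1 (hQ t h0 ht).isUnit)
  have hBL : B * (P * Bᵀ * D) = 1 := by
    rw [hL, hB', blockMat_mul, ← blockMat_one]
    exact blockMat_congr fun s t hs _ => whitening_mul_resp_block hM hΦself hΦstep s t hs
  rw [← Matrix.mul_assoc, ← Matrix.mul_assoc]
  exact mul_eq_one_comm.1 hBL
end
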